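/- arXiv:2302.05352 — 4 statements merged into one kernel-verified Lean document; each statement's English description precedes it below -/
import Mathlib

section
/- Let (X, 𝒯, P, ≤, {σ_x : x ∈ X}) be a typed topological space, and let p ∈ P be a type such that the assignment σ has least p-neighborhood. Then for every subset A ⊆ X, p⊢tr(p⊢tr(A)) = p⊢tr(A). -/
open Set

/-- A typed topological space: a topological space `X` together with a partially
ordered set `P` of types and, for each `x : X`, a partial assignment `σ x` of
types to open sets containing `x`, such that on its domain the assignment is
order-reflecting: `σ x U ≤ σ x V ↔ U ⊆ V`. -/
structure TypedSpace (X : Type*) (P : Type*) [TopologicalSpace X] [PartialOrder P] where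
  σ : X → Set X → Option P
  dom_mem : ∀ x U p, σ x U = some p → IsOpen U ∧ x ∈ U
  mono : ∀ x U V pU pV, σ x U = some pU → σ x V = some pV → (pU ≤ pV ↔ U ⊆ V)

namespace TypedSpace

variable {X P : Type*} [TopologicalSpace X] [PartialOrder P]

/-- `U` is a type-`p` open neighborhood of `x`, written `p ⊢ U(x)`. -/
def IsNbhd (T : TypedSpace X P) (p : P) (x : X) (U : Set X) : Prop :=
  T.σ x U = some p

/-- `x` is a `p`-accumulation point of `A`: every type-`p` open neighborhood
of `x` meets `A`. -/
def IsAccPt (T : TypedSpace X P) (p : P) (A : Set X) (x : X) : Prop :=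
  ∀ U, T.IsNbhd p x U → (U ∩ A).Nonempty

/-- The direct `p`-closure `p⊢CL₁(A) = A ∪ {x : x is a p-accumulation point of A}`. -/
def CL1 (T : TypedSpace X P) (p : P) (A : Set X) : Set X :=
  A ∪ {x | T.IsAccPt p A x}

/-- Iterated `p`-closures: `p⊢CL₀(A) = A`, `p⊢CLₙ₊₁(A) = p⊢CL₁(p⊢CLₙ(A))`. -/
def CLn (T : TypedSpace X P) (p : P) : ℕ → Set X → Set X
  | 0, A => A
  | n + 1, A => T.CL1 p (T.CLn p n A)

/-- The transitive `p`-closure `p⊢tr(A) = ⋃ₙ p⊢CLₙ(A)`. -/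
def tr (T : TypedSpace X P) (p : P) (A : Set X) : Set X :=
  ⋃ n, T.CLn p n A

/-- The tracks: `p⊢Track₀(A) = A`, and `p⊢Trackᵢ(A) = p⊢CLᵢ(A) \ p⊢CLᵢ₋₁(A)` for `i ≥ 1`. -/
def Track (T : TypedSpace X P) (p : P) (i : ℕ) (A : Set X) : Set X :=
  if i = 0 then A else T.CLn p i A \ T.CLn p (i - 1) A

/-- `Umin` assigns to each point a least type-`p` open neighborhood. -/
def HasLeast (T : TypedSpace X P) (p : P) (Umin : X → Set X) : Prop :=
  ∀ x, T.IsNbhd p x (Umin x) ∧ ∀ V, T.IsNbhd p x V → Umin x ⊆ V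

/-- The type of English-text "σ has least p-neighborhood": some least neighborhood
assignment exists. -/
def HasLeastNbhd (T : TypedSpace X P) (p : P) : Prop :=
  ∃ Umin : X → Set X, T.HasLeast p Umin

/-- `A` is type-`p`-connected: there do not exist two collections of type-`p`
open neighborhoods `{p⊢U(xᵢ) : i ∈ I}`, `{p⊢V(xⱼ) : j ∈ J}` with `I, J` nonempty,
`A = {xᵢ} ∪ {xⱼ}` and `(⋃ U(xᵢ)) ∩ (⋃ V(xⱼ)) = ∅`. -/
def Connected (T : TypedSpace X P) (p : P) (A : Set X) : Prop :=
  ¬ ∃ (s t : Set X) (U V : X → Set X),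
      s.Nonempty ∧ t.Nonempty ∧ A = s ∪ t ∧
      (∀ x ∈ s, T.IsNbhd p x (U x)) ∧ (∀ y ∈ t, T.IsNbhd p y (V y)) ∧
      (⋃ x ∈ s, U x) ∩ (⋃ y ∈ t, V y) = ∅

/-- The type-`p`-connected component of `x`: the union of all type-`p`-connected
subsets containing `x`. -/
def Comp (T : TypedSpace X P) (p : P) (x : X) : Set X :=
  ⋃₀ {A : Set X | x ∈ A ∧ T.Connected p A}

/-- The space is `p`-symmetrically typed. -/
def SymTyped (T : TypedSpace X P) (p : P) : Prop :=
  ∀ x y : X, (∃ U, T.IsNbhd p x U ∧ y ∉ U) → ∃ V, T.IsNbhd p y V ∧ x ∉ V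

/-- `D` and `D'` are `p`-closure disjoint. -/
def ClosureDisjoint (T : TypedSpace X P) (p : P) (D D' : Set X) : Prop :=
  T.tr p D ∩ T.tr p D' = ∅

/-- `D` is `p`-closure connected: it cannot be partitioned into two nonempty
`p`-closure disjoint subsets. -/
def ClosureConnected (T : TypedSpace X P) (p : P) (D : Set X) : Prop :=
  ¬ ∃ E E' : Set X, E.Nonempty ∧ E'.Nonempty ∧ E ∪ E' = D ∧ E ∩ E' = ∅ ∧
      T.ClosureDisjoint p E E'

/-- The cluster `p⊢tr(x)` is straight. -/
def StraightAt (T : TypedSpace X P) (p : P) (x : X) : Prop :=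
  ∀ i j : ℕ, 0 < i → i < j → ∀ y z : X,
    y ∈ T.Track p i {x} → z ∈ T.Track p j {x} →
      y ∈ T.CL1 p {z} → z ∈ T.CL1 p {y}

/-- `X` is `p`-straight: every cluster `p⊢tr(x)` is straight. -/
def Straight (T : TypedSpace X P) (p : P) : Prop :=
  ∀ x : X, T.StraightAt p x

/-- `X` is `(p, q)`-uniformly typed. -/
def UniformlyTyped (T : TypedSpace X P) (p q : P) : Prop :=
  ∀ (x : X) (j k : ℕ), (T.CLn p j {x} ∩ T.CLn q k {x}).Nonempty →
    T.CLn p j {x} ⊆ T.CLn q k {x}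

/-- The cluster `q⊢tr(x)` is `(p,q)`-straight: for `y, z, w ∈ q⊢tr(x)` with
`z, w ∈ p⊢tr(y)`, `index_{p,y}(z) ≤ index_{p,y}(w)` implies
`index_{q,y}(z) ≤ index_{q,y}(w)` (indices being the track numbers). -/
def PQStraightAt (T : TypedSpace X P) (p q : P) (x : X) : Prop :=
  ∀ y z w : X, y ∈ T.tr q {x} → z ∈ T.tr q {x} → w ∈ T.tr q {x} →
    z ∈ T.tr p {y} → w ∈ T.tr p {y} →
    ∀ iz iw : ℕ, z ∈ T.Track p iz {y} → w ∈ T.Track p iw {y} → iz ≤ iw →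
      ∀ jz jw : ℕ, z ∈ T.Track q jz {y} → w ∈ T.Track q jw {y} → jz ≤ jw

end TypedSpace

/-!
Two type-`p` neighborhoods of a point have the same type, so the order condition on `σ` makes each
contain the other: a point has at most one of them. Hence an accumulation point of a union is
already one of some member, that is, `p⊢CL₁` commutes with nonempty unions. Applied to
`p⊢tr(A) = ⋃ₙ p⊢CLₙ(A)`, this shifts the index by one, so `p⊢tr(A)` is a fixed point of `p⊢CL₁`.
-/

namespace TypedSpace

variable {X P : Type*} {ι : Sort*} [TopologicalSpace X] [PartialOrder P]
  {T : TypedSpace X P} {p : P} {x : X} {U V A B : Set X}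

theorem IsNbhd.unique (hU : T.IsNbhd p x U) (hV : T.IsNbhd p x V) : U = V :=
  Subset.antisymm ((T.mono x U V p p hU hV).mp le_rfl) ((T.mono x V U p p hV hU).mp le_rfl)

theorem IsAccPt.mono (hx : T.IsAccPt p A x) (hAB : A ⊆ B) : T.IsAccPt p B x :=
  fun U hU => (hx U hU).mono (inter_subset_inter_right U hAB)

theorem isAccPt_iUnion [Nonempty ι] {s : ι → Set X} :
    T.IsAccPt p (⋃ i, s i) x ↔ ∃ i, T.IsAccPt p (s i) x := by
  refine ⟨fun hx => ?_, fun ⟨i, hi⟩ => hi.mono (subset_iUnion s i)⟩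
  by_cases hU : ∃ U, T.IsNbhd p x U
  · obtain ⟨U, hU⟩ := hU
    obtain ⟨y, hyU, hy⟩ := hx U hU
    obtain ⟨i, hi⟩ := mem_iUnion.mp hy
    exact ⟨i, fun V hV => ⟨y, hU.unique hV ▸ hyU, hi⟩⟩
  · -- A point without type-`p` neighborhoods is vacuously a `p`-accumulation point of every set.
    exact ⟨Classical.arbitrary ι, fun V hV => (hU ⟨V, hV⟩).elim⟩

theorem CL1_iUnion [Nonempty ι] (T : TypedSpace X P) (p : P) (s : ι → Set X) :
    T.CL1 p (⋃ i, s i) = ⋃ i, T.CL1 p (s i) := by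
  simp only [CL1, iUnion_union_distrib, isAccPt_iUnion, ofPred_exists]

theorem CL1_tr_subset (T : TypedSpace X P) (p : P) (A : Set X) :
    T.CL1 p (T.tr p A) ⊆ T.tr p A :=
  calc T.CL1 p (T.tr p A)
      = ⋃ n, T.CLn p (n + 1) A := T.CL1_iUnion p fun n => T.CLn p n A
    _ ⊆ T.tr p A := iUnion_subset fun n => subset_iUnion (fun n => T.CLn p n A) (n + 1)

theorem CL1_tr (T : TypedSpace X P) (p : P) (A : Set X) : T.CL1 p (T.tr p A) = T.tr p A :=
  (T.CL1_tr_subset p A).antisymm subset_union_left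

theorem CLn_eq_self_of_CL1_eq_self (hA : T.CL1 p A = A) (n : ℕ) : T.CLn p n A = A := by
  induction n with
  | zero => rfl
  | succ n ih => rw [CLn, ih, hA]

theorem tr_eq_self_of_CL1_eq_self (hA : T.CL1 p A = A) : T.tr p A = A := by
  simp only [tr, CLn_eq_self_of_CL1_eq_self hA, iUnion_const]

end TypedSpace

theorem stmt_1_general {X P : Type*} [TopologicalSpace X] [PartialOrder P]
    (T : TypedSpace X P) (p : P) (A : Set X) : T.tr p (T.tr p A) = T.tr p A :=
  TypedSpace.tr_eq_self_of_CL1_eq_self (T.CL1_tr p A)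

/-- When σ has least p-neighborhood, `p⊢tr(p⊢tr(A)) = p⊢tr(A)`. -/
theorem stmt_1 {X P : Type*} [TopologicalSpace X] [PartialOrder P]
    (T : TypedSpace X P) (p : P) (hleast : T.HasLeastNbhd p) (A : Set X) :
    T.tr p (T.tr p A) = T.tr p A :=
  stmt_1_general T p A
end

section
/- Let (X, 𝒯, P, ≤, {σ_x : x ∈ X}) be a typed topological space and p ∈ P. If a subset A ⊆ X is type-p-connected, then the transitive p-closure p⊢tr(A) is type-p-connected. -/
open Set

/-!
A separation of a set `B` restricts to every subset `A ⊆ B`, so a connected `A` lies in one of its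
two sides. An accumulation point of one side cannot lie in the other, because its chosen
neighborhood on the other side would have to meet the first; hence the direct closure of a connected
set is connected. The transitive closure is then an increasing union of connected sets, and the side
of a separation containing one of them contains all the others.
-/

namespace TypedSpace

variable {X P : Type*} [TopologicalSpace X] [PartialOrder P] {T : TypedSpace X P} {p : P}
  {A B s t s' t' : Set X}

theorem IsNbhd.mem {x : X} {U : Set X} (hU : T.IsNbhd p x U) : x ∈ U :=
  (T.dom_mem x U p hU).2

theorem CL1_mono (h : A ⊆ B) : T.CL1 p A ⊆ T.CL1 p B :=
  union_subset_union h fun _ hx U hU => (hx U hU).mono (inter_subset_inter_right U h)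

theorem IsNbhd.inter_nonempty_of_mem_CL1 {x : X} {U : Set X} (hU : T.IsNbhd p x U)
    (hx : x ∈ T.CL1 p A) : (U ∩ A).Nonempty :=
  hx.elim (fun hxA => ⟨x, hU.mem, hxA⟩) fun hacc => hacc U hU

theorem CLn_monotone : Monotone fun n => T.CLn p n A :=
  monotone_nat_of_le_succ fun _ => subset_union_left

/-- Two sets are separated at type `p` when their points have type-`p` open neighborhoods such that
those of the one set are disjoint from those of the other. A set is connected when it is not the
union of two nonempty separated sets; disjointness is required pairwise rather than of the unions
of the neighborhoods. -/
def Separated (T : TypedSpace X P) (p : P) (s t : Set X) : Prop :=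
  ∃ U V : X → Set X, (∀ x ∈ s, T.IsNbhd p x (U x)) ∧ (∀ y ∈ t, T.IsNbhd p y (V y)) ∧
    ∀ x ∈ s, ∀ y ∈ t, Disjoint (U x) (V y)

theorem Separated.symm : T.Separated p s t → T.Separated p t s := by
  rintro ⟨U, V, hU, hV, hdisj⟩
  exact ⟨V, U, hV, hU, fun y hy x hx => (hdisj x hx y hy).symm⟩

theorem Separated.mono (h : T.Separated p s t) (hs : s' ⊆ s) (ht : t' ⊆ t) :
    T.Separated p s' t' := by
  obtain ⟨U, V, hU, hV, hdisj⟩ := h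
  exact ⟨U, V, fun x hx => hU x (hs hx), fun y hy => hV y (ht hy),
    fun x hx y hy => hdisj x (hs hx) y (ht hy)⟩

theorem Separated.disjoint_CL1_left (h : T.Separated p s t) : Disjoint (T.CL1 p s) t := by
  obtain ⟨U, V, hU, hV, hdisj⟩ := h
  refine disjoint_left.2 fun y hys hyt => ?_
  obtain ⟨x, hxV, hxs⟩ := (hV y hyt).inter_nonempty_of_mem_CL1 hys
  exact disjoint_left.1 (hdisj x hxs y hyt) (hU x hxs).mem hxV

theorem Separated.disjoint (h : T.Separated p s t) : Disjoint s t :=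
  h.disjoint_CL1_left.mono_left subset_union_left

theorem Separated.subset_left_of_subset_CL1 (h : T.Separated p s t) (hA : A ⊆ s)
    (hBA : B ⊆ T.CL1 p A) (hB : B ⊆ s ∪ t) : B ⊆ s :=
  (h.disjoint_CL1_left.mono_left (hBA.trans (CL1_mono hA))).subset_left_of_subset_union hB

theorem connected_iff_forall_ne_union :
    T.Connected p A ↔
      ∀ s t, T.Separated p s t → s.Nonempty → t.Nonempty → A ≠ s ∪ t := by
  simp_rw [Connected, ← disjoint_iff_inter_eq_empty, disjoint_iUnion₂_left,
    disjoint_iUnion₂_right]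
  constructor
  · rintro hA s t ⟨U, V, hU, hV, hdisj⟩ hs ht hst
    exact hA ⟨s, t, U, V, hs, ht, hst, hU, hV, hdisj⟩
  · rintro hA ⟨s, t, U, V, hs, ht, hst, hU, hV, hdisj⟩
    exact hA s t ⟨U, V, hU, hV, hdisj⟩ hs ht hst

theorem connected_iff_subset_of_separated :
    T.Connected p A ↔ ∀ s t, T.Separated p s t → A ⊆ s ∪ t → A ⊆ s ∨ A ⊆ t := by
  rw [connected_iff_forall_ne_union]
  constructor
  · intro hA s t hst hAst
    by_contra! hsub
    obtain ⟨x, hxA, hxs⟩ := not_subset.1 hsub.1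
    obtain ⟨y, hyA, hyt⟩ := not_subset.1 hsub.2
    refine hA (A ∩ s) (A ∩ t) (hst.mono inter_subset_right inter_subset_right)
      ⟨y, hyA, (hAst hyA).resolve_right hyt⟩ ⟨x, hxA, (hAst hxA).resolve_left hxs⟩ ?_
    rw [← inter_union_distrib_left, inter_eq_left.2 hAst]
  · rintro hA s t hst ⟨x, hxs⟩ ⟨y, hyt⟩ rfl
    rcases hA s t hst Subset.rfl with hs | ht
    · exact disjoint_left.1 hst.disjoint (hs (.inr hyt)) hyt
    · exact disjoint_left.1 hst.disjoint hxs (ht (.inl hxs))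

theorem Connected.of_subset_CL1 (hA : T.Connected p A) (hAB : A ⊆ B) (hBA : B ⊆ T.CL1 p A) :
    T.Connected p B := by
  rw [connected_iff_subset_of_separated] at hA ⊢
  intro s t hst hB
  exact (hA s t hst (hAB.trans hB)).imp
    (fun hAs => hst.subset_left_of_subset_CL1 hAs hBA hB)
    (fun hAt => hst.symm.subset_left_of_subset_CL1 hAt hBA (union_comm s t ▸ hB))

theorem Connected.CLn (hA : T.Connected p A) (n : ℕ) : T.Connected p (T.CLn p n A) := by
  induction n with
  | zero => exact hA
  | succ n ih => exact ih.of_subset_CL1 subset_union_left Subset.rfl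

theorem connected_iUnion_of_directed {ι : Sort*} {C : ι → Set X} (hdir : Directed (· ⊆ ·) C)
    (hC : ∀ i, T.Connected p (C i)) : T.Connected p (⋃ i, C i) := by
  simp only [connected_iff_subset_of_separated, iUnion_subset_iff] at hC ⊢
  intro s t hst hCst
  by_contra! hsub
  obtain ⟨⟨i, hi⟩, j, hj⟩ := hsub
  obtain ⟨k, hik, hjk⟩ := hdir i j
  exact (hC k s t hst (hCst k)).elim (fun hks => hi (hik.trans hks)) fun hkt => hj (hjk.trans hkt)

end TypedSpace

/-- If `A` is type-p-connected, then `p⊢tr(A)` is type-p-connected. -/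
theorem stmt_3 {X P : Type*} [TopologicalSpace X] [PartialOrder P]
    (T : TypedSpace X P) (p : P) (A : Set X) (hA : T.Connected p A) :
    T.Connected p (T.tr p A) :=
  TypedSpace.connected_iUnion_of_directed TypedSpace.CLn_monotone.directed_le hA.CLn
end

section
/- Let (X, 𝒯, P, ≤, {σ_x : x ∈ X}) be a typed topological space with X finite, and let p ∈ P. For any nonempty subset D ⊆ X there is a unique partition D = D₁ ∪ D₂ ∪ ... ∪ D_t into nonempty sets such that each D_i is p-closure connected and the union of any two or more of the D_i's is p-closure disconnected. -/
open Set

/-!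
Closure connectedness shares the two features of topological connectedness that produce components:
singletons are connected, and so is a union of connected sets through a common point. The second
holds because the transitive closure is extensive and monotone, so that a connected set covered by
two closure disjoint sets lies in one of them. The components of `D` form the required partition.
It is the only one: a component is the union of the pieces it contains, and since this union is
connected there is only one such piece.
-/

/-- A connectivity class: a family of subsets of `α`, to be thought of as the connected ones, that
contains the singletons and is closed under unions of members through a common point. The family is
encoded as a predicate; taking the union of no sets shows that it contains `∅`. -/
structure IsConnectivityClass {α : Type*} (C : Set α → Prop) : Prop where
  singleton : ∀ x, C {x}
  sUnion : ∀ (𝒜 : Set (Set α)) (x : α), (∀ A ∈ 𝒜, x ∈ A) → (∀ A ∈ 𝒜, C A) → C (⋃₀ 𝒜)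

namespace IsConnectivityClass

variable {α : Type*} {C : Set α → Prop} {A D E : Set α} {𝒟 S : Set (Set α)} {x y : α}

/-- The component of `x` in `D`: the union of all `C`-connected subsets of `D` through `x`. It is
empty when `x ∉ D`. -/
def componentIn (C : Set α → Prop) (D : Set α) (x : α) : Set α :=
  ⋃₀ {A | x ∈ A ∧ A ⊆ D ∧ C A}

/-- The family of all components of `D`. -/
def componentsIn (C : Set α → Prop) (D : Set α) : Set (Set α) :=
  componentIn C D '' D

theorem componentIn_subset : componentIn C D x ⊆ D :=
  sUnion_subset fun _ hA => hA.2.1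

theorem subset_componentIn (hA : C A) (hAD : A ⊆ D) (hx : x ∈ A) : A ⊆ componentIn C D x :=
  subset_sUnion_of_mem ⟨hx, hAD, hA⟩

theorem connected_componentIn (hC : IsConnectivityClass C) : C (componentIn C D x) :=
  hC.sUnion _ x (fun _ hA => hA.1) fun _ hA => hA.2.2

theorem mem_componentIn (hC : IsConnectivityClass C) (hx : x ∈ D) : x ∈ componentIn C D x :=
  subset_componentIn (hC.singleton x) (singleton_subset_iff.2 hx) rfl rfl

theorem componentIn_eq_of_mem (hC : IsConnectivityClass C) (hy : y ∈ componentIn C D x) :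
    componentIn C D y = componentIn C D x := by
  have hxy : componentIn C D x ⊆ componentIn C D y :=
    subset_componentIn hC.connected_componentIn componentIn_subset hy
  obtain ⟨A, ⟨hxA, hAD, -⟩, -⟩ := hy
  have hx : x ∈ componentIn C D y := hxy (hC.mem_componentIn (hAD hxA))
  exact (subset_componentIn hC.connected_componentIn componentIn_subset hx).antisymm hxy

theorem nonempty_of_mem_componentsIn (hC : IsConnectivityClass C) (hE : E ∈ componentsIn C D) :
    E.Nonempty := by
  obtain ⟨x, hx, rfl⟩ := hE
  exact ⟨x, hC.mem_componentIn hx⟩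

theorem connected_of_mem_componentsIn (hC : IsConnectivityClass C) (hE : E ∈ componentsIn C D) :
    C E := by
  obtain ⟨x, -, rfl⟩ := hE
  exact hC.connected_componentIn

theorem pairwiseDisjoint_componentsIn (hC : IsConnectivityClass C) :
    (componentsIn C D).PairwiseDisjoint id := by
  rintro _ ⟨x, -, rfl⟩ _ ⟨y, -, rfl⟩ hne
  refine disjoint_left.2 fun z hzx hzy => hne ?_
  rw [← hC.componentIn_eq_of_mem hzx, ← hC.componentIn_eq_of_mem hzy]

theorem sUnion_componentsIn (hC : IsConnectivityClass C) : ⋃₀ componentsIn C D = D :=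
  (sUnion_subset <| forall_mem_image.2 fun _ _ => componentIn_subset).antisymm
    fun _ hx => ⟨_, mem_image_of_mem _ hx, hC.mem_componentIn hx⟩

theorem eq_of_mem_componentsIn_of_subset (hC : IsConnectivityClass C)
    (hE : E ∈ componentsIn C D) (hA : C A) (hAD : A ⊆ D) (hEA : E ⊆ A) : E = A := by
  obtain ⟨x, hx, rfl⟩ := hE
  exact hEA.antisymm (subset_componentIn hA hAD (hEA (hC.mem_componentIn hx)))

theorem not_connected_sUnion_of_subset_componentsIn (hC : IsConnectivityClass C)
    (hS : S ⊆ componentsIn C D) (hS₂ : S.Nontrivial) : ¬ C (⋃₀ S) := by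
  intro hconn
  have hSD : ⋃₀ S ⊆ D := (sUnion_subset_sUnion hS).trans hC.sUnion_componentsIn.subset
  have eq_sUnion : ∀ E ∈ S, E = ⋃₀ S := fun E hE =>
    hC.eq_of_mem_componentsIn_of_subset (hS hE) hconn hSD (subset_sUnion_of_mem hE)
  obtain ⟨E, hE, F, hF, hne⟩ := hS₂
  exact hne ((eq_sUnion E hE).trans (eq_sUnion F hF).symm)

theorem sUnion_sep_subset_componentIn (hC : IsConnectivityClass C) (hU : ⋃₀ 𝒟 = D)
    (hconn : ∀ E ∈ 𝒟, C E) :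
    ⋃₀ {F ∈ 𝒟 | F ⊆ componentIn C D x} = componentIn C D x := by
  refine (sUnion_subset fun F hF => hF.2).antisymm fun y hy => ?_
  obtain ⟨F, hF, hyF⟩ := hU.superset (componentIn_subset hy)
  have hFy : F ⊆ componentIn C D y :=
    subset_componentIn (hconn F hF) (hU ▸ subset_sUnion_of_mem hF) hyF
  exact ⟨F, ⟨hF, hFy.trans (hC.componentIn_eq_of_mem hy).subset⟩, hyF⟩

theorem componentIn_eq_of_mem_partition (hC : IsConnectivityClass C) (hU : ⋃₀ 𝒟 = D)
    (hconn : ∀ E ∈ 𝒟, C E) (hdisc : ∀ S ⊆ 𝒟, S.Nontrivial → ¬ C (⋃₀ S))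
    (hE : E ∈ 𝒟) (hx : x ∈ E) : componentIn C D x = E := by
  have hunion := hC.sUnion_sep_subset_componentIn (x := x) hU hconn
  have hsub : {F ∈ 𝒟 | F ⊆ componentIn C D x}.Subsingleton :=
    not_nontrivial_iff.1 fun h =>
      hdisc _ (sep_subset _ _) h (hunion.symm ▸ hC.connected_componentIn)
  have hEx : E ⊆ componentIn C D x :=
    subset_componentIn (hconn E hE) (hU ▸ subset_sUnion_of_mem hE) hx
  rw [← hunion, hsub.eq_singleton_of_mem ⟨hE, hEx⟩, sUnion_singleton]

theorem eq_componentsIn (hC : IsConnectivityClass C) (hne : ∀ E ∈ 𝒟, E.Nonempty)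
    (hU : ⋃₀ 𝒟 = D) (hconn : ∀ E ∈ 𝒟, C E)
    (hdisc : ∀ S ⊆ 𝒟, S.Nontrivial → ¬ C (⋃₀ S)) : 𝒟 = componentsIn C D := by
  ext E
  constructor
  · intro hE
    obtain ⟨x, hx⟩ := hne E hE
    exact ⟨x, hU ▸ mem_sUnion_of_mem hx hE,
      hC.componentIn_eq_of_mem_partition hU hconn hdisc hE hx⟩
  · rintro ⟨x, hx, rfl⟩
    obtain ⟨F, hF, hxF⟩ := hU.superset hx
    rwa [hC.componentIn_eq_of_mem_partition hU hconn hdisc hF hxF]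

theorem existsUnique_partition (hC : IsConnectivityClass C) (D : Set α) :
    ∃! 𝒟 : Set (Set α),
      (∀ E ∈ 𝒟, E.Nonempty) ∧
      (∀ E ∈ 𝒟, ∀ F ∈ 𝒟, E ≠ F → E ∩ F = ∅) ∧
      ⋃₀ 𝒟 = D ∧
      (∀ E ∈ 𝒟, C E) ∧
      ∀ S ⊆ 𝒟, S.Nontrivial → ¬ C (⋃₀ S) :=
  ⟨componentsIn C D,
    ⟨fun _ => hC.nonempty_of_mem_componentsIn,
      fun _ hE _ hF hne => (hC.pairwiseDisjoint_componentsIn hE hF hne).inter_eq,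
      hC.sUnion_componentsIn,
      fun _ => hC.connected_of_mem_componentsIn,
      fun _ => hC.not_connected_sUnion_of_subset_componentsIn⟩,
    fun _ ⟨hne, _, hU, hconn, hdisc⟩ => hC.eq_componentsIn hne hU hconn hdisc⟩

end IsConnectivityClass

namespace TypedSpace

variable {X P : Type*} [TopologicalSpace X] [PartialOrder P]
  {T : TypedSpace X P} {p : P} {A B D E E' : Set X}

theorem CL1_mono_s13 : Monotone (T.CL1 p) := fun _ _ h =>
  union_subset_union h fun _ hx U hU => (hx U hU).mono (inter_subset_inter_right U h)

theorem CLn_mono : ∀ n, Monotone (T.CLn p n)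
  | 0 => monotone_id
  | n + 1 => CL1_mono_s13.comp (CLn_mono n)

theorem tr_mono : Monotone (T.tr p) := fun _ _ h =>
  iUnion_mono fun n => CLn_mono n h

theorem subset_tr : A ⊆ T.tr p A :=
  subset_iUnion (fun n => T.CLn p n A) 0

theorem ClosureDisjoint.mono (h : T.ClosureDisjoint p E E') (hA : A ⊆ E) (hB : B ⊆ E') :
    T.ClosureDisjoint p A B :=
  subset_eq_empty (inter_subset_inter (tr_mono hA) (tr_mono hB)) h

theorem ClosureDisjoint.disjoint (h : T.ClosureDisjoint p E E') : Disjoint E E' :=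
  (disjoint_iff_inter_eq_empty.2 h).mono subset_tr subset_tr

theorem closureConnected_iff_subset_or_subset :
    T.ClosureConnected p D ↔
      ∀ E E', D ⊆ E ∪ E' → T.ClosureDisjoint p E E' → D ⊆ E ∨ D ⊆ E' := by
  constructor
  · intro hD E E' hcover hd
    by_contra! h
    obtain ⟨⟨a, haD, haE⟩, b, hbD, hbE'⟩ := h.imp not_subset.1 not_subset.1
    have hd' : T.ClosureDisjoint p (D ∩ E) (D ∩ E') :=
      hd.mono inter_subset_right inter_subset_right
    exact hD ⟨D ∩ E, D ∩ E', ⟨b, hbD, (hcover hbD).resolve_right hbE'⟩,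
      ⟨a, haD, (hcover haD).resolve_left haE⟩,
      by rw [← inter_union_distrib_left, inter_eq_left.2 hcover], hd'.disjoint.inter_eq, hd'⟩
  · rintro h ⟨E, E', ⟨a, ha⟩, ⟨b, hb⟩, rfl, hI, hd⟩
    rcases h E E' Subset.rfl hd with hE | hE'
    · exact hI.subset ⟨hE (Or.inr hb), hb⟩
    · exact hI.subset ⟨ha, hE' (Or.inl ha)⟩

theorem closureConnected_singleton (x : X) : T.ClosureConnected p {x} := by
  simp only [closureConnected_iff_subset_or_subset, singleton_subset_iff]
  exact fun _ _ hx _ => hx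

theorem closureConnected_sUnion {𝒜 : Set (Set X)} {x : X} (hx : ∀ A ∈ 𝒜, x ∈ A)
    (h𝒜 : ∀ A ∈ 𝒜, T.ClosureConnected p A) : T.ClosureConnected p (⋃₀ 𝒜) := by
  refine closureConnected_iff_subset_or_subset.2 fun E E' hcover hd => ?_
  have hor : ∀ A ∈ 𝒜, A ⊆ E ∨ A ⊆ E' := fun A hA =>
    closureConnected_iff_subset_or_subset.1 (h𝒜 A hA) E E'
      ((subset_sUnion_of_mem hA).trans hcover) hd
  by_cases hxE : x ∈ E
  · exact Or.inl <| sUnion_subset fun A hA => (hor A hA).resolve_right fun hAE' =>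
      disjoint_left.1 hd.disjoint hxE (hAE' (hx A hA))
  · exact Or.inr <| sUnion_subset fun A hA => (hor A hA).resolve_left fun hAE =>
      hxE (hAE (hx A hA))

theorem isConnectivityClass_closureConnected : IsConnectivityClass (T.ClosureConnected p) where
  singleton := closureConnected_singleton
  sUnion _ _ := closureConnected_sUnion

end TypedSpace

theorem existsUnique_finset_iff {α : Type*} [Finite α] {q : Set α → Prop} :
    (∃! s : Finset α, q s) ↔ ∃! s : Set α, q s :=
  (Function.Bijective.existsUnique_iff
    ⟨Finset.coe_injective, fun s => ⟨s.toFinite.toFinset, s.toFinite.coe_toFinset⟩⟩).symm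

theorem forall_finset_subset_two_le_card_iff {α : Type*} {t : Finset α} {q : Set α → Prop} :
    (∀ s ⊆ t, 2 ≤ s.card → q s) ↔ ∀ s ⊆ (t : Set α), s.Nontrivial → q s := by
  constructor
  · intro h s hst hs
    lift s to Finset α using t.finite_toSet.subset hst
    exact h s (Finset.coe_subset.1 hst) (Finset.one_lt_card_iff_nontrivial.2 hs)
  · exact fun h s hst hs =>
      h s (Finset.coe_subset.2 hst) (Finset.one_lt_card_iff_nontrivial.1 hs)

theorem stmt_13_general {X P : Type*} [TopologicalSpace X] [PartialOrder P]
    (T : TypedSpace X P) (p : P) (D : Set X) :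
    ∃! 𝒟 : Set (Set X),
      (∀ E ∈ 𝒟, E.Nonempty) ∧
      (∀ E ∈ 𝒟, ∀ F ∈ 𝒟, E ≠ F → E ∩ F = ∅) ∧
      ⋃₀ 𝒟 = D ∧
      (∀ E ∈ 𝒟, T.ClosureConnected p E) ∧
      ∀ S ⊆ 𝒟, S.Nontrivial → ¬ T.ClosureConnected p (⋃₀ S) :=
  TypedSpace.isConnectivityClass_closureConnected.existsUnique_partition D

/-- In a finite typed topological space, every nonempty `D ⊆ X`
has a unique partition into nonempty p-closure connected pieces such that the
union of any two or more pieces is p-closure disconnected. -/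
theorem stmt_13 {X P : Type*} [TopologicalSpace X] [PartialOrder P] [Finite X]
    (T : TypedSpace X P) (p : P) (D : Set X) (hD : D.Nonempty) :
    ∃! 𝒟 : Finset (Set X),
      (∀ E ∈ 𝒟, E.Nonempty) ∧
      (∀ E ∈ 𝒟, ∀ F ∈ 𝒟, E ≠ F → E ∩ F = ∅) ∧
      ⋃₀ (𝒟 : Set (Set X)) = D ∧
      (∀ E ∈ 𝒟, T.ClosureConnected p E) ∧
      ∀ S ⊆ 𝒟, 2 ≤ S.card → ¬ T.ClosureConnected p (⋃₀ (S : Set (Set X))) := by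
  simpa only [← forall_finset_subset_two_le_card_iff, Finset.mem_coe] using
    existsUnique_finset_iff.2 (stmt_13_general T p D)
end

section
/- Let X be a finite subset of ℝ² with at least two points, let γ = min{d(x, y) : x ≠ y ∈ X}, and let n be a positive integer with 2nγ ≥ max{d(x, y) : x ≠ y ∈ X}. Equip each point x ∈ X with the neighborhoods L(r, x) of type left-r and R(r, x) of type right-r, for r ∈ {γ, 2γ, ..., 2nγ}. If the resulting typed topological space is p-symmetrically typed for every type p — equivalently, since L(r, x) and R(r, x) are the least neighborhoods of their types at x, if for all such r and all x, y ∈ X one has y ∈ L(r, x) ⟺ x ∈ L(r, y) and y ∈ R(r, x) ⟺ x ∈ R(r, y) — then all points of X lie on a single vertical line, i.e., there is a constant a with first coordinate x_i = a for every point of X. -/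
open Set

/-- The left-r neighborhood of `x` in a data set `X ⊆ ℝ²`:
`L(r,x) = {y ∈ X : d(x,y) ≤ r and y₀ ≤ x₀}`. -/
def leftNbhd (X : Set (EuclideanSpace ℝ (Fin 2))) (r : ℝ)
    (x : EuclideanSpace ℝ (Fin 2)) : Set (EuclideanSpace ℝ (Fin 2)) :=
  {y ∈ X | dist x y ≤ r ∧ y 0 ≤ x 0}

/-- The right-r neighborhood of `x` in a data set `X ⊆ ℝ²`:
`R(r,x) = {y ∈ X : d(x,y) ≤ r and y₀ ≥ x₀}`. -/
def rightNbhd (X : Set (EuclideanSpace ℝ (Fin 2))) (r : ℝ)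
    (x : EuclideanSpace ℝ (Fin 2)) : Set (EuclideanSpace ℝ (Fin 2)) :=
  {y ∈ X | dist x y ≤ r ∧ x 0 ≤ y 0}

section

variable {X : Set (EuclideanSpace ℝ (Fin 2))} {r : ℝ}

theorem apply_zero_eq_of_leftNbhd_symm_of_dist_le
    (hsymm : ∀ x ∈ X, ∀ y ∈ X, y ∈ leftNbhd X r x → x ∈ leftNbhd X r y)
    {x y : EuclideanSpace ℝ (Fin 2)} (hx : x ∈ X) (hy : y ∈ X) (hxy : dist x y ≤ r) :
    x 0 = y 0 := by
  wlog hle : y 0 ≤ x 0 generalizing x y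
  · exact (this hy hx (dist_comm x y ▸ hxy) (le_of_not_ge hle)).symm
  have hmem : x ∈ leftNbhd X r y := hsymm x hx y hy ⟨hy, hxy, hle⟩
  exact le_antisymm hmem.2.2 hle

theorem stmt_17_general
    (hdist : ∀ x ∈ X, ∀ y ∈ X, dist x y ≤ r)
    (hsymm : ∀ x ∈ X, ∀ y ∈ X, y ∈ leftNbhd X r x → x ∈ leftNbhd X r y) :
    ∃ a : ℝ, ∀ x ∈ X, x 0 = a := by
  obtain rfl | ⟨p, hp⟩ := X.eq_empty_or_nonempty
  · exact ⟨0, fun _ hx => hx.elim⟩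
  · exact ⟨p 0, fun x hx =>
      apply_zero_eq_of_leftNbhd_symm_of_dist_le hsymm hx hp (hdist x hx p hp)⟩

end

/-- Let `X ⊆ ℝ²` be finite with at least two points,
`γ = min{d(x,y) : x ≠ y ∈ X}`, and `n ≥ 1` with `2nγ ≥ max{d(x,y) : x ≠ y ∈ X}`.
If the typed topology given by the neighborhoods `L(kγ, x)` (type left-kγ) and
`R(kγ, x)` (type right-kγ), `1 ≤ k ≤ 2n`, is symmetrically typed — i.e. (these
being the least neighborhoods of their types) `y ∈ L(kγ,x) ↔ x ∈ L(kγ,y)` and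
`y ∈ R(kγ,x) ↔ x ∈ R(kγ,y)` for all `x, y ∈ X` — then all points of `X`
lie on one vertical line. -/
theorem stmt_17 (X : Set (EuclideanSpace ℝ (Fin 2))) (hX : X.Finite)
    (htwo : ∃ x ∈ X, ∃ y ∈ X, x ≠ y)
    (γ : ℝ) (hγ : IsLeast {d : ℝ | ∃ x ∈ X, ∃ y ∈ X, x ≠ y ∧ d = dist x y} γ)
    (n : ℕ) (hn : 0 < n)
    (hmax : ∀ x ∈ X, ∀ y ∈ X, dist x y ≤ 2 * n * γ)
    (hsym : ∀ k : ℕ, 1 ≤ k → k ≤ 2 * n → ∀ x ∈ X, ∀ y ∈ X,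
      (y ∈ leftNbhd X (k * γ) x ↔ x ∈ leftNbhd X (k * γ) y) ∧
      (y ∈ rightNbhd X (k * γ) x ↔ x ∈ rightNbhd X (k * γ) y)) :
    ∃ a : ℝ, ∀ x ∈ X, x 0 = a := by
  have hspan : ∀ x ∈ X, ∀ y ∈ X, dist x y ≤ (2 * n : ℕ) * γ := mod_cast hmax
  exact stmt_17_general hspan fun x hx y hy => (hsym (2 * n) (by lia) le_rfl x hx y hy).1.mp
end
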